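/- Let n, m, N be positive integers, let M ∈ ℂ^{m×m} be Hermitian positive semidefinite, let R ∈ ℂ^{n×m}, let w_0, …, w_{N−1} > 0, let t'_0, …, t'_{N−1} ∈ [0,1), let B ≥ 0, and let D : ℂ^{n×m} → ℂ^{n×m} satisfy ‖D(H)‖_F ≤ B for all H. Set R_limit = max_{0 ≤ i < N} ‖R (M + w_i^{−1} I)^{−1}‖_F + B, and given H_0 ∈ ℂ^{n×m} define H_{i+1} = t'_i · H_0 + (1 − t'_i) · (R + w_i^{−1} D(H_i)) (M + w_i^{−1} I)^{−1} for i = 0, …, N−1. If ‖H_0‖_F ≤ R_limit, then ‖H_i‖_F ≤ R_limit for every 0 ≤ i ≤ N; in particular the inner-loop map T : H_0 ↦ H_N maps the closed Frobenius-norm ball of radius R_limit into itself. -/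

import Mathlib

open Matrix
open scoped ComplexOrder

/-- The Frobenius norm of a complex matrix. -/
noncomputable def frobNorm {n m : ℕ} (A : Matrix (Fin n) (Fin m) ℂ) : ℝ :=
  Real.sqrt (∑ i, ∑ j, ‖A i j‖ ^ 2)

/-- The inner loop of the RC-Flow algorithm: starting from the anchor `H0`, it iterates
`H_{i+1} = t'_i • H0 + (1 - t'_i) • (R + w_i⁻¹ • D(H_i)) * (M + w_i⁻¹ • 1)⁻¹`. -/
noncomputable def innerIter {n m : ℕ} (M : Matrix (Fin m) (Fin m) ℂ)
    (R : Matrix (Fin n) (Fin m) ℂ) (w t' : ℕ → ℝ)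
    (D : Matrix (Fin n) (Fin m) ℂ → Matrix (Fin n) (Fin m) ℂ)
    (H0 : Matrix (Fin n) (Fin m) ℂ) : ℕ → Matrix (Fin n) (Fin m) ℂ
  | 0 => H0
  | i + 1 => t' i • H0 +
      (1 - t' i) • ((R + (w i)⁻¹ • D (innerIter M R w t' D H0 i)) * (M + (w i)⁻¹ • 1)⁻¹)

section helpers
attribute [local instance] Matrix.frobeniusNormedAddCommGroup Matrix.frobeniusNormedSpace

theorem frobNorm_eq_norm {n m : ℕ} (A : Matrix (Fin n) (Fin m) ℂ) : frobNorm A = ‖A‖ := by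
  rw [Matrix.frobenius_norm_def, frobNorm, Real.sqrt_eq_rpow]
  simp

theorem frobNorm_add_le {n m : ℕ} (A B : Matrix (Fin n) (Fin m) ℂ) :
    frobNorm (A + B) ≤ frobNorm A + frobNorm B := by
  simp only [frobNorm_eq_norm]
  exact norm_add_le A B

theorem frobNorm_smul {n m : ℕ} (c : ℝ) (hc : 0 ≤ c) (A : Matrix (Fin n) (Fin m) ℂ) :
    frobNorm (c • A) = c * frobNorm A := by
  simp only [frobNorm_eq_norm]
  rw [norm_smul, Real.norm_of_nonneg hc]

end helpers

theorem frobNorm_nonneg' {n m : ℕ} (A : Matrix (Fin n) (Fin m) ℂ) : 0 ≤ frobNorm A :=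
  Real.sqrt_nonneg _

theorem frobNorm_sq {n m : ℕ} (A : Matrix (Fin n) (Fin m) ℂ) :
    frobNorm A ^ 2 = (Matrix.trace (A * Aᴴ)).re := by
  rw [frobNorm, Real.sq_sqrt (by positivity)]
  simp [Matrix.trace, Matrix.mul_apply, Complex.mul_conj, Complex.normSq_eq_norm_sq,
    ← Complex.ofReal_pow]

theorem frobNorm_resolvent {n m : ℕ} (M : Matrix (Fin m) (Fin m) ℂ) (hM : M.PosSemidef)
    (c : ℝ) (hc : 0 < c) (X : Matrix (Fin n) (Fin m) ℂ) :
    frobNorm ((c • X) * (M + c • 1)⁻¹) ≤ frobNorm X := by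
  have hpd : (M + c • (1 : Matrix (Fin m) (Fin m) ℂ)).PosDef :=
    Matrix.PosDef.posSemidef_add hM (Matrix.PosDef.one.smul hc)
  have hu : IsUnit (M + c • (1 : Matrix (Fin m) (Fin m) ℂ)).det :=
    (Matrix.isUnit_iff_isUnit_det _).1 hpd.isUnit
  obtain ⟨Y, hY⟩ : ∃ Y, Y = X * (M + c • (1 : Matrix (Fin m) (Fin m) ℂ))⁻¹ := ⟨_, rfl⟩
  have hX : X = Y * M + c • Y := by
    have : Y * (M + c • (1 : Matrix (Fin m) (Fin m) ℂ)) = X := by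
      rw [hY, Matrix.nonsing_inv_mul_cancel_right _ _ hu]
    rw [← this, Matrix.mul_add, Matrix.mul_smul, Matrix.mul_one]
  rw [Matrix.smul_mul, ← hY]
  refine (sq_le_sq₀ (frobNorm_nonneg' _) (frobNorm_nonneg' _)).1 ?_
  have h1 : 0 ≤ (Matrix.trace (Y * M * Yᴴ)).re :=
    (Complex.le_def.1 (hM.mul_mul_conjTranspose_same Y).trace_nonneg).1
  have h2 := sq_nonneg (frobNorm (Y * M))
  have hMH : Mᴴ = M := hM.isHermitian
  have key : frobNorm X ^ 2 = frobNorm (Y * M) ^ 2 + 2 * c * (Matrix.trace (Y * M * Yᴴ)).re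
      + frobNorm (c • Y) ^ 2 := by
    rw [hX]
    simp only [frobNorm_sq, Matrix.conjTranspose_add, Matrix.conjTranspose_smul,
      Matrix.conjTranspose_mul, hMH, Matrix.add_mul, Matrix.mul_add, Matrix.trace_add,
      Complex.add_re, Matrix.smul_mul, Matrix.mul_smul, Matrix.trace_smul, Complex.smul_re,
      star_trivial, smul_eq_mul, Matrix.mul_assoc]
    ring
  have := mul_nonneg hc.le h1
  linarith

/-- **Self-mapping on a compact ball.**  If `‖H0‖_F ≤ R_limit`, then every iterate of the
inner loop stays in the closed Frobenius ball of radius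
`R_limit = max_i ‖R (M + w_i⁻¹ I)⁻¹‖_F + B`; in particular the inner-loop map
`T : H0 ↦ H_N` maps this ball into itself. -/
theorem rcflow_inner_loop_self_map {n m N : ℕ} (hn : 0 < n) (hm : 0 < m) (hN : 0 < N)
    (M : Matrix (Fin m) (Fin m) ℂ) (hM : M.PosSemidef)
    (R : Matrix (Fin n) (Fin m) ℂ)
    (w t' : ℕ → ℝ) (hw : ∀ i < N, 0 < w i) (ht' : ∀ i < N, t' i ∈ Set.Ico (0 : ℝ) 1)
    (B : ℝ) (hB : 0 ≤ B)
    (D : Matrix (Fin n) (Fin m) ℂ → Matrix (Fin n) (Fin m) ℂ)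
    (hDbdd : ∀ H, frobNorm (D H) ≤ B)
    (Rlimit : ℝ)
    (hRlimit : Rlimit =
      ((Finset.range N).sup' (Finset.nonempty_range_iff.mpr hN.ne')
        fun i => frobNorm (R * (M + (w i)⁻¹ • 1)⁻¹)) + B)
    (H0 : Matrix (Fin n) (Fin m) ℂ) (hH0 : frobNorm H0 ≤ Rlimit) :
    (∀ i ≤ N, frobNorm (innerIter M R w t' D H0 i) ≤ Rlimit) ∧
      frobNorm (innerIter M R w t' D H0 N) ≤ Rlimit := by
  have main : ∀ i ≤ N, frobNorm (innerIter M R w t' D H0 i) ≤ Rlimit := by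
    intro i hi
    cases i with
    | zero => simpa [innerIter] using hH0
    | succ i =>
      have hiN : i < N := hi
      obtain ⟨ht0, ht1⟩ := ht' i hiN
      rw [innerIter]
      set X := D (innerIter M R w t' D H0 i) with hXdef
      have hP : frobNorm ((R + (w i)⁻¹ • X) * (M + (w i)⁻¹ • 1)⁻¹) ≤ Rlimit := by
        rw [Matrix.add_mul, hRlimit]
        refine (frobNorm_add_le _ _).trans (add_le_add ?_ ?_)
        · exact Finset.le_sup' (fun i => frobNorm (R * (M + (w i)⁻¹ • 1)⁻¹))
            (Finset.mem_range.2 hiN)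
        · exact (frobNorm_resolvent M hM _ (inv_pos.2 (hw i hiN)) X).trans (hDbdd _)
      refine (frobNorm_add_le _ _).trans ?_
      rw [frobNorm_smul _ ht0, frobNorm_smul _ (by linarith)]
      have e1 := mul_le_mul_of_nonneg_left hH0 ht0
      have e2 := mul_le_mul_of_nonneg_left hP (show 0 ≤ 1 - t' i by linarith)
      linarith
  exact ⟨main, main N le_rfl⟩
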